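/- arXiv:2507.01405 — 4 statements merged into one kernel-verified Lean document; each statement's English description precedes it below -/
import Mathlib

section
/- For every x : ℤ, the symmetric 13×13 integer matrix M indexed by {0,…,12} with entries M₀₀ = −2, M₀₁ = 2, M₀₂ = −2, M₀₃ = −1, M₁₁ = 14, M₁₂ = x, M₁₃ = 3, M₂₂ = 0, M₂₃ = 0, M₃₃ = −1, M₃₄ = 1, Mᵢᵢ = −2 for 4 ≤ i ≤ 12, and all other entries (up to symmetry) equal to 0, satisfies det M = 2¹²·(x − 8). Consequently, if det M = 0 then x = 8. -/
open Matrix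

/-- The symmetric 13×13 intersection matrix of `K_W, D, F, G, N₀, …, N₈` in the case `k = 9`,
with `D·F = x` as a parameter. Entries are specified on `i ≤ j` and extended by symmetry. -/
def interMat9 (x : ℤ) : Matrix (Fin 13) (Fin 13) ℤ :=
  Matrix.of fun i j =>
    let a := min i.val j.val
    let b := max i.val j.val
    if a = 0 ∧ b = 0 then -2
    else if a = 0 ∧ b = 1 then 2
    else if a = 0 ∧ b = 2 then -2
    else if a = 0 ∧ b = 3 then -1
    else if a = 1 ∧ b = 1 then 14
    else if a = 1 ∧ b = 2 then x
    else if a = 1 ∧ b = 3 then 3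
    else if a = 2 ∧ b = 2 then 0
    else if a = 2 ∧ b = 3 then 0
    else if a = 3 ∧ b = 3 then -1
    else if a = 3 ∧ b = 4 then 1
    else if 4 ≤ a ∧ a = b then -2
    else 0

/-- The block of `K_W, D, F, G, N₀`. -/
def interBlock (x : ℤ) : Matrix (Fin 5) (Fin 5) ℤ :=
  !![-2, 2, -2, -1, 0; 2, 14, x, 3, 0; -2, x, 0, 0, 0; -1, 3, 0, -1, 1; 0, 0, 0, 1, -2]

lemma interMat9_block_det (x : ℤ) : (interBlock x).det = 16 * (x - 8) := by
  simp [interBlock, Matrix.det_succ_row_zero, Fin.sum_univ_succ, Fin.succAbove]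
  ring

lemma interMat9_blocks (x : ℤ) :
    (interMat9 x).submatrix (finSumFinEquiv (m := 5) (n := 8)) (finSumFinEquiv (m := 5) (n := 8))
      = Matrix.fromBlocks (interBlock x) 0 0 (Matrix.diagonal fun _ => -2) := by
  ext i j
  rcases i with i | i <;> rcases j with j | j <;> fin_cases i <;> fin_cases j <;> rfl

theorem det_interMat9 (x : ℤ) :
    (interMat9 x).det = 2 ^ 12 * (x - 8) ∧ ((interMat9 x).det = 0 → x = 8) := by
  have h : (interMat9 x).det = 2 ^ 12 * (x - 8) := by
    rw [← Matrix.det_submatrix_equiv_self (finSumFinEquiv (m := 5) (n := 8)) (interMat9 x),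
      interMat9_blocks, Matrix.det_fromBlocks_zero₂₁, interMat9_block_det, Matrix.det_diagonal]
    simp
    ring
  refine ⟨h, fun h0 => ?_⟩
  rw [h] at h0
  omega
end

section
/- For every x : ℤ, the symmetric 15×15 integer matrix M indexed by {0,…,14} with entries M₀₀ = −4, M₀₁ = 0, M₀₂ = −2, M₀₃ = −1, M₁₁ = 14, M₁₂ = x, M₁₃ = 1, M₂₂ = 0, M₂₃ = 0, M₃₃ = −1, M₃₄ = 1, Mᵢᵢ = −2 for 4 ≤ i ≤ 14, and all other entries (up to symmetry) equal to 0, satisfies det M = 2¹¹·(x − 4)·(x + 8). Consequently, if x > 0 and det M = 0 then x = 4. -/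
open Matrix

/-- The symmetric 15×15 intersection matrix of `K_W, D, F, G, N₀, …, N₁₀` in the case `k = 11`,
with `D·F = x` as a parameter. Entries are specified on `i ≤ j` and extended by symmetry. -/
def interMat11 (x : ℤ) : Matrix (Fin 15) (Fin 15) ℤ :=
  Matrix.of fun i j =>
    let a := min i.val j.val
    let b := max i.val j.val
    if a = 0 ∧ b = 0 then -4
    else if a = 0 ∧ b = 1 then 0
    else if a = 0 ∧ b = 2 then -2
    else if a = 0 ∧ b = 3 then -1
    else if a = 1 ∧ b = 1 then 14
    else if a = 1 ∧ b = 2 then x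
    else if a = 1 ∧ b = 3 then 1
    else if a = 2 ∧ b = 2 then 0
    else if a = 2 ∧ b = 3 then 0
    else if a = 3 ∧ b = 3 then -1
    else if a = 3 ∧ b = 4 then 1
    else if 4 ≤ a ∧ a = b then -2
    else 0

def interBlockA (x : ℤ) : Matrix (Fin 5) (Fin 5) ℤ :=
  !![-4, 0, -2, -1, 0;
     0, 14, x, 1, 0;
     -2, x, 0, 0, 0;
     -1, 1, 0, -1, 1;
     0, 0, 0, 1, -2]

lemma det_interBlockA (x : ℤ) : (interBlockA x).det = 2 * (x - 4) * (x + 8) := by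
  simp [interBlockA, Matrix.det_succ_row_zero, Fin.sum_univ_succ, Fin.succAbove]
  ring

/-- The intersection matrix is block diagonal: the classes `N₁, …, N₁₀` split off. -/
lemma interMat11_blocks (x : ℤ) :
    (interMat11 x).submatrix (finSumFinEquiv (m := 5) (n := 10)) (finSumFinEquiv (m := 5) (n := 10))
      = Matrix.fromBlocks (interBlockA x) 0 0 (Matrix.diagonal fun _ : Fin 10 => (-2 : ℤ)) := by
  ext i j
  rcases i with i | i <;> rcases j with j | j
  · fin_cases i <;> fin_cases j <;> rfl
  · have := i.isLt
    simp only [interMat11, Matrix.submatrix_apply, Matrix.of_apply, finSumFinEquiv_apply_left,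
      finSumFinEquiv_apply_right, Fin.val_castAdd, Fin.val_natAdd, Matrix.fromBlocks_apply₁₂,
      Matrix.zero_apply]
    repeat' rw [if_neg (by omega)]
  · have := j.isLt
    simp only [interMat11, Matrix.submatrix_apply, Matrix.of_apply, finSumFinEquiv_apply_left,
      finSumFinEquiv_apply_right, Fin.val_castAdd, Fin.val_natAdd, Matrix.fromBlocks_apply₂₁,
      Matrix.zero_apply]
    repeat' rw [if_neg (by omega)]
  · simp only [interMat11, Matrix.submatrix_apply, Matrix.of_apply,
      finSumFinEquiv_apply_right, Fin.val_natAdd, Matrix.fromBlocks_apply₂₂,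
      Matrix.diagonal_apply, Fin.ext_iff]
    iterate 11 rw [if_neg (by omega)]
    exact if_congr (by omega) rfl rfl

lemma det_interMat11_aux (x : ℤ) :
    (interMat11 x).det = 2 ^ 11 * (x - 4) * (x + 8) := by
  rw [← Matrix.det_submatrix_equiv_self (finSumFinEquiv (m := 5) (n := 10)) (interMat11 x),
    interMat11_blocks, Matrix.det_fromBlocks_zero₂₁, det_interBlockA, Matrix.det_diagonal]
  simp
  ring

theorem det_interMat11 (x : ℤ) :
    (interMat11 x).det = 2 ^ 11 * (x - 4) * (x + 8) ∧
      (x > 0 → (interMat11 x).det = 0 → x = 4) := by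
  refine ⟨det_interMat11_aux x, fun hx h => ?_⟩
  rw [det_interMat11_aux] at h
  have h8 : x + 8 ≠ 0 := by omega
  have h4 : x - 4 = 0 := by simpa [h8] using h
  omega
end

section
/- Let n : ℕ and let ⟨·,·⟩ denote the Minkowski bilinear form on ℝ^{n+1}. Suppose K, D, F, G, N : Fin (n+1) → ℝ satisfy ⟨K,K⟩ = −2, ⟨K,D⟩ = 2, ⟨D,D⟩ = 14, ⟨K,F⟩ = −2, ⟨D,F⟩ = 8, ⟨F,F⟩ = 0, ⟨K,G⟩ = −1, ⟨D,G⟩ = 3, ⟨G,G⟩ = −1, ⟨F,G⟩ = 0, ⟨K,N⟩ = 0, ⟨D,N⟩ = 0, ⟨F,N⟩ = 0, ⟨G,N⟩ = 1 and ⟨N,N⟩ = −2. Then 4·K + D = 2·F + 2·G + N. -/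
/-- The Minkowski (Lorentzian) bilinear form on `ℝ^{n+1}`:
`⟨x, y⟩ = x 0 * y 0 - ∑_{i=1}^{n} x i * y i`. -/
def mink (n : ℕ) (x y : Fin (n + 1) → ℝ) : ℝ :=
  x 0 * y 0 - ∑ i ∈ Finset.Ioi (0 : Fin (n + 1)), x i * y i

lemma mink_add_left (n : ℕ) (x y z : Fin (n + 1) → ℝ) :
    mink n (x + y) z = mink n x z + mink n y z := by
  simp only [mink, Pi.add_apply, add_mul, Finset.sum_add_distrib]; ring

lemma mink_smul_left (n : ℕ) (c : ℝ) (x z : Fin (n + 1) → ℝ) :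
    mink n (c • x) z = c * mink n x z := by
  simp only [mink, Pi.smul_apply, smul_eq_mul, mul_assoc, ← Finset.mul_sum]; ring

lemma mink_symm (n : ℕ) (x y : Fin (n + 1) → ℝ) : mink n x y = mink n y x := by
  simp only [mink, mul_comm]

lemma mink_add_right (n : ℕ) (x y z : Fin (n + 1) → ℝ) :
    mink n z (x + y) = mink n z x + mink n z y := by
  rw [mink_symm, mink_add_left, mink_symm n x, mink_symm n y]

lemma mink_smul_right (n : ℕ) (c : ℝ) (x z : Fin (n + 1) → ℝ) :
    mink n z (c • x) = c * mink n z x := by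
  rw [mink_symm, mink_smul_left, mink_symm n x]

lemma mink_index (n : ℕ) (m v : Fin (n + 1) → ℝ) (hm : 0 < mink n m m)
    (hmv : mink n m v = 0) (hv : mink n v v = 0) : v = 0 := by
  have cs := Finset.sum_mul_sq_le_sq_mul_sq (Finset.Ioi (0 : Fin (n + 1))) m v
  simp only [mink, ← pow_two] at hm hmv hv
  rw [← sub_eq_zero.mp hmv, ← sub_eq_zero.mp hv] at cs
  have h0 : v 0 = 0 := by
    by_contra h
    have : 0 < v 0 ^ 2 := by positivity
    nlinarith [mul_pos hm this]
  rw [h0] at hv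
  have hs : ∑ i ∈ Finset.Ioi (0 : Fin (n + 1)), v i ^ 2 = 0 := by linarith
  rw [Finset.sum_eq_zero_iff_of_nonneg (fun i _ => sq_nonneg _)] at hs
  funext i
  rcases eq_or_ne i 0 with rfl | hi
  · exact h0
  · exact pow_eq_zero_iff (two_ne_zero) |>.mp (hs i (by simpa [Fin.pos_iff_ne_zero] using hi))

/-- Step 2 of Proposition 2.6 (case k = 9): `4K_W + D ≡ 2F + 2G + N₀`. -/
theorem case9_M4_decomposition (n : ℕ) (K D F G N : Fin (n + 1) → ℝ)
    (hKK : mink n K K = -2) (hKD : mink n K D = 2) (hDD : mink n D D = 14)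
    (hKF : mink n K F = -2) (hDF : mink n D F = 8) (hFF : mink n F F = 0)
    (hKG : mink n K G = -1) (hDG : mink n D G = 3) (hGG : mink n G G = -1)
    (hFG : mink n F G = 0)
    (hKN : mink n K N = 0) (hDN : mink n D N = 0) (hFN : mink n F N = 0)
    (hGN : mink n G N = 1) (hNN : mink n N N = -2) :
    4 • K + D = 2 • F + 2 • G + N := by
  have key := mink_index n ((3 : ℝ) • K + D)
    ((4 : ℝ) • K + D + (-2 : ℝ) • F + (-2 : ℝ) • G + (-1 : ℝ) • N) ?_ ?_ ?_
  · funext i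
    have := congrFun key i
    simp at this ⊢
    linarith
  all_goals
    simp only [mink_add_left, mink_add_right, mink_smul_left, mink_smul_right,
      mink_symm n D K, mink_symm n F K, mink_symm n F D, mink_symm n G K, mink_symm n G D,
      mink_symm n G F, mink_symm n N K, mink_symm n N D, mink_symm n N F, mink_symm n N G,
      hKK, hKD, hDD, hKF, hDF, hFF, hKG, hDG, hGG, hFG, hKN, hDN, hFN, hGN, hNN]
    norm_num
end

section
/- Let n : ℕ and let ⟨·,·⟩ denote the Minkowski bilinear form on ℝ^{n+1}. Suppose D, C, N : Fin (n+1) → ℝ satisfy ⟨D,D⟩ = 14, ⟨C,C⟩ = −1, ⟨N,N⟩ = −2, ⟨D,N⟩ = 0, 0 ≤ ⟨D,C⟩ ≤ 3, and ⟨C,N⟩ = t for some integer t ≥ 1. Then t = 1. -/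
/-- Reverse Cauchy-Schwarz (index theorem) for the Minkowski form. -/
theorem mink_index_s16 (n : ℕ) (D X : Fin (n + 1) → ℝ) (hD : 0 < mink n D D) :
    mink n D D * mink n X X ≤ mink n D X ^ 2 := by
  have hS : 0 ≤ ∑ i ∈ Finset.Ioi (0 : Fin (n + 1)), (D 0 * X i - X 0 * D i) ^ 2 :=
    Finset.sum_nonneg fun i _ => sq_nonneg _
  have hp : 0 ≤ ∑ i ∈ Finset.Ioi (0 : Fin (n + 1)), D i * D i :=
    Finset.sum_nonneg fun i _ => mul_self_nonneg _
  have hE : ∑ i ∈ Finset.Ioi (0 : Fin (n + 1)), (D 0 * X i - X 0 * D i) ^ 2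
      = D 0 ^ 2 * ∑ i ∈ Finset.Ioi (0 : Fin (n + 1)), X i * X i
        - 2 * D 0 * X 0 * ∑ i ∈ Finset.Ioi (0 : Fin (n + 1)), D i * X i
        + X 0 ^ 2 * ∑ i ∈ Finset.Ioi (0 : Fin (n + 1)), D i * D i := by
    simp only [Finset.mul_sum, ← Finset.sum_sub_distrib, ← Finset.sum_add_distrib]
    exact Finset.sum_congr rfl fun i _ => by ring
  rw [hE] at hS
  unfold mink at *
  generalize (∑ i ∈ Finset.Ioi (0 : Fin (n + 1)), D i * D i) = p at *
  generalize (∑ i ∈ Finset.Ioi (0 : Fin (n + 1)), D i * X i) = r at *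
  generalize (∑ i ∈ Finset.Ioi (0 : Fin (n + 1)), X i * X i) = q at *
  generalize D 0 = a at *
  generalize X 0 = b at *
  have ha : 0 < a ^ 2 := by nlinarith
  have hm := mul_nonneg hD.le hS
  have hsq := sq_nonneg (b * (a * a - p) - a * (a * b - r))
  have : 0 ≤ a ^ 2 * ((a * b - r) ^ 2 - (a * a - p) * (b * b - q)) := by nlinarith
  have := nonneg_of_mul_nonneg_right this ha
  linarith

theorem mink_add_right_s16 (n : ℕ) (X Y Z : Fin (n + 1) → ℝ) :
    mink n X (Y + Z) = mink n X Y + mink n X Z := by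
  simp only [mink, Pi.add_apply, mul_add, Finset.sum_add_distrib]
  ring

theorem mink_comm (n : ℕ) (X Y : Fin (n + 1) → ℝ) : mink n X Y = mink n Y X := by
  simp only [mink, mul_comm]

/-- The recurring index-theorem argument: a (−1)-class `C` with `0 ≤ D·C ≤ 3` meets a
nodal class `N` (with `D·N = 0`) in at most one point. -/
theorem nodal_intersection_one (n : ℕ) (D C N : Fin (n + 1) → ℝ) (t : ℤ)
    (hDD : mink n D D = 14) (hCC : mink n C C = -1) (hNN : mink n N N = -2)
    (hDN : mink n D N = 0) (hDC0 : 0 ≤ mink n D C) (hDC3 : mink n D C ≤ 3)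
    (hCN : mink n C N = (t : ℝ)) (ht : 1 ≤ t) :
    t = 1 := by
  have h := mink_index_s16 n D (C + N) (by rw [hDD]; norm_num)
  rw [mink_add_right_s16, mink_add_right_s16, mink_comm n (C + N) C, mink_comm n (C + N) N,
    mink_add_right_s16, mink_add_right_s16, mink_comm n N C, hDD, hCC, hNN, hDN, hCN] at h
  by_contra hne
  have h2 : (2 : ℝ) ≤ t := by exact_mod_cast (show (2 : ℤ) ≤ t by omega)
  nlinarith
end
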